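/- Let R be a commutative ring, let B be a cochain complex of R-modules with B^i = 0 for all i < m, and let f : A → A' be a chain map of cochain complexes of R-modules with homological order |f|_h ≥ d. Then the induced map id_B ⊗ f : B ⊗ A → B ⊗ A' has homological order |id_B ⊗ f|_h ≥ d + m. (Tensoring with a bounded-below complex preserves homological orders up to the bound shift.) -/

import Mathlib

open CategoryTheory CategoryTheory.Limits MonoidalCategory

/-- Cochain complexes of `R`-modules, with differential of degree `+1`. -/
abbrev Cx (R : Type) [Ring R] := CochainComplex (ModuleCat R) ℤ

/-- `homOrderGE f d` says that the homological order `|f|_h` is at least `d`: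
there is a complex `C`, chain homotopy equivalent to the mapping cone of `f`,
which vanishes in all degrees `< d`. -/
def homOrderGE {R : Type} [Ring R] {A B : Cx R} (f : A ⟶ B) (d : ℤ) : Prop :=
  ∃ C : Cx R, Nonempty (HomotopyEquiv (CochainComplex.mappingCone f) C) ∧
    ∀ i : ℤ, i < d → IsZero (C.X i)

section Monoidal

variable {R : Type} [CommRing R]

instance (X : ModuleCat R) : PreservesColimitsOfSize.{0, 0} ((curriedTensor (ModuleCat R)).obj X) :=
  inferInstanceAs (PreservesColimitsOfSize.{0, 0} (tensorLeft X))

noncomputable instance (X : ModuleCat R) :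
    PreservesColimitsOfSize.{0, 0} ((curriedTensor (ModuleCat R)).flip.obj X) :=
  preservesColimits_of_natIso
    (NatIso.ofComponents (fun Y => β_ X Y) (by intros; simp) :
      tensorLeft X ≅ (curriedTensor (ModuleCat R)).flip.obj X)

instance : (curriedTensor (ModuleCat R)).Additive where
  map_add := by
    intros
    ext Z
    simp [curriedTensor, MonoidalPreadditive.add_whiskerRight]

set_option synthInstance.maxHeartbeats 1000000
set_option maxHeartbeats 1000000

/-
A biadditive functor `F` makes `F(B, -)` a differential graded functor: it acts on cochains
between complexes, with Koszul signs, compatibly with composition and with the differential `δ`.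
A mapping cone is characterised by differential graded identities between its inclusions and
projections, so `F(B, cone f)` is the cone of `F(B, f)`. If `cone f` is homotopy equivalent to a
complex `C` vanishing below `d`, the cone of `F(B, f)` is therefore homotopy equivalent to
`F(B, C)`, which vanishes below `d + m` as soon as `B` vanishes below `m`.
-/

section Bifunctor

open HomologicalComplex

variable {C₁ C₂ D I₁ I₂ J : Type*} [Category* C₁] [Category* C₂] [Category* D]
  {c₁ : ComplexShape I₁} {c₂ : ComplexShape I₂} {c : ComplexShape J}
  [TotalComplexShape c₁ c₂ c] [DecidableEq J]

section ZeroMorphisms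

variable [HasZeroMorphisms C₁] [HasZeroMorphisms C₂] [Preadditive D]
  (F : C₁ ⥤ C₂ ⥤ D) [F.PreservesZeroMorphisms] [∀ X, (F.obj X).PreservesZeroMorphisms]

lemma isZero_mapBifunctor_X (K₁ : HomologicalComplex C₁ c₁) (K₂ : HomologicalComplex C₂ c₂)
    [HasMapBifunctor K₁ K₂ F c] (j : J)
    (h : ∀ i₁ i₂, ComplexShape.π c₁ c₂ c (i₁, i₂) = j → IsZero (K₁.X i₁) ∨ IsZero (K₂.X i₂)) :
    IsZero ((mapBifunctor K₁ K₂ F c).X j) := by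
  rw [IsZero.iff_id_eq_zero]
  ext i₁ i₂ hj
  apply IsZero.eq_of_src
  obtain h₁ | h₂ := h i₁ i₂ hj
  · rw [IsZero.iff_id_eq_zero] at h₁ ⊢
    rw [← NatTrans.id_app, ← F.map_id, h₁, F.map_zero, zero_app]
  · rw [IsZero.iff_id_eq_zero] at h₂ ⊢
    rw [← (F.obj _).map_id, h₂, Functor.map_zero]

lemma mapBifunctorMap_id (K₁ : HomologicalComplex C₁ c₁) (K₂ : HomologicalComplex C₂ c₂)
    [HasMapBifunctor K₁ K₂ F c] : mapBifunctorMap (𝟙 K₁) (𝟙 K₂) F c = 𝟙 _ := by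
  ext
  simp

lemma mapBifunctorMap_comp {K₁ L₁ M₁ : HomologicalComplex C₁ c₁}
    {K₂ L₂ M₂ : HomologicalComplex C₂ c₂} [HasMapBifunctor K₁ K₂ F c]
    [HasMapBifunctor L₁ L₂ F c] [HasMapBifunctor M₁ M₂ F c]
    (f₁ : K₁ ⟶ L₁) (g₁ : L₁ ⟶ M₁) (f₂ : K₂ ⟶ L₂) (g₂ : L₂ ⟶ M₂) :
    mapBifunctorMap f₁ f₂ F c ≫ mapBifunctorMap g₁ g₂ F c =
      mapBifunctorMap (f₁ ≫ g₁) (f₂ ≫ g₂) F c := by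
  ext
  simp

end ZeroMorphisms

variable [Preadditive C₁] [Preadditive C₂] [Preadditive D]
  (F : C₁ ⥤ C₂ ⥤ D) [F.Additive] [∀ X, (F.obj X).Additive]

/-- The homotopy from `F(f₁, f₂)` to the identity induced by homotopies from `f₁` and `f₂` to
the identity. -/
noncomputable def mapBifunctorCompHomotopyId {K₁ L₁ : HomologicalComplex C₁ c₁}
    {K₂ L₂ : HomologicalComplex C₂ c₂}
    [HasMapBifunctor K₁ K₂ F c] [HasMapBifunctor L₁ L₂ F c]
    {f₁ : K₁ ⟶ L₁} {g₁ : L₁ ⟶ K₁} {f₂ : K₂ ⟶ L₂} {g₂ : L₂ ⟶ K₂}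
    (h₁ : Homotopy (f₁ ≫ g₁) (𝟙 K₁)) (h₂ : Homotopy (f₂ ≫ g₂) (𝟙 K₂)) :
    Homotopy (mapBifunctorMap f₁ f₂ F c ≫ mapBifunctorMap g₁ g₂ F c) (𝟙 _) :=
  (Homotopy.ofEq (mapBifunctorMap_comp F f₁ g₁ f₂ g₂)).trans <|
    (mapBifunctorMapHomotopy₁ h₁ (f₂ ≫ g₂) F c).trans <|
      (mapBifunctorMapHomotopy₂ (𝟙 K₁) h₂ F c).trans <|
        Homotopy.ofEq (mapBifunctorMap_id F K₁ K₂)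

/-- The homotopy equivalence between the values of a biadditive functor induced by
homotopy equivalences in both variables. -/
noncomputable def mapBifunctorHomotopyEquiv {K₁ L₁ : HomologicalComplex C₁ c₁}
    {K₂ L₂ : HomologicalComplex C₂ c₂}
    [HasMapBifunctor K₁ K₂ F c] [HasMapBifunctor L₁ L₂ F c]
    (e₁ : HomotopyEquiv K₁ L₁) (e₂ : HomotopyEquiv K₂ L₂) :
    HomotopyEquiv (mapBifunctor K₁ K₂ F c) (mapBifunctor L₁ L₂ F c) where
  hom := mapBifunctorMap e₁.hom e₂.hom F c
  inv := mapBifunctorMap e₁.inv e₂.inv F c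
  homotopyHomInvId :=
    mapBifunctorCompHomotopyId F e₁.homotopyHomInvId e₂.homotopyHomInvId
  homotopyInvHomId :=
    mapBifunctorCompHomotopyId F e₁.homotopyInvHomId e₂.homotopyInvHomId

end Bifunctor

section MappingCone

open CochainComplex CochainComplex.HomComplex
open HomologicalComplex (HasHomotopyCofiber)

variable {C : Type*} [Category* C] [Preadditive C]

lemma isIso_of_ofHom_comp_eq_id {K L : CochainComplex C ℤ} (f : K ⟶ L) (g : Cochain L K 0)
    (hfg : (Cochain.ofHom f).comp g (add_zero 0) = Cochain.ofHom (𝟙 K))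
    (hgf : g.comp (Cochain.ofHom f) (add_zero 0) = Cochain.ofHom (𝟙 L)) : IsIso f := by
  have (n : ℤ) : IsIso (f.f n) :=
    ⟨g.v n n (add_zero n), by simpa using Cochain.congr_v hfg n n (add_zero n),
      by simpa using Cochain.congr_v hgf n n (add_zero n)⟩
  exact HomologicalComplex.Hom.isIso_of_components f

variable {K L M : CochainComplex C ℤ} (φ : K ⟶ L) [HasHomotopyCofiber φ]

lemma isIso_mappingCone_desc (i : Cochain K M (-1)) (r : L ⟶ M)
    (hi : δ (-1) 0 i = Cochain.ofHom (φ ≫ r)) (p : Cochain M K 1) (s : Cochain M L 0)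
    (hip : i.comp p (neg_add_cancel 1) = Cochain.ofHom (𝟙 K))
    (his : i.comp s (add_zero (-1)) = 0)
    (hrp : (Cochain.ofHom r).comp p (zero_add 1) = 0)
    (hrs : (Cochain.ofHom r).comp s (zero_add 0) = Cochain.ofHom (𝟙 L))
    (hid : p.comp i (add_neg_cancel 1) + s.comp (Cochain.ofHom r) (add_zero 0) =
      Cochain.ofHom (𝟙 M)) :
    IsIso (mappingCone.desc φ i r hi) := by
  refine isIso_of_ofHom_comp_eq_id _ (mappingCone.liftCochain φ p s (zero_add 1)) ?_ ?_
  · rw [mappingCone.ofHom_desc, mappingCone.ext_cochain_from_iff φ (-1) 0 (neg_add_cancel 1)]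
    constructor
    · rw [← Cochain.comp_assoc_of_third_is_zero_cochain, mappingCone.inl_descCochain,
        mappingCone.liftCochain, Cochain.comp_add,
        ← Cochain.comp_assoc i p _ (neg_add_cancel 1) (add_neg_cancel 1) (by lia),
        ← Cochain.comp_assoc_of_third_is_zero_cochain, hip, his, Cochain.id_comp,
        Cochain.zero_comp, add_zero, Cochain.comp_id]
    · rw [← Cochain.comp_assoc_of_third_is_zero_cochain, mappingCone.inr_descCochain,
        mappingCone.liftCochain, Cochain.comp_add,
        ← Cochain.comp_assoc_of_first_is_zero_cochain,
        ← Cochain.comp_assoc_of_third_is_zero_cochain, hrp, hrs, Cochain.zero_comp,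
        Cochain.id_comp, zero_add, Cochain.comp_id]
  · rw [mappingCone.ofHom_desc, mappingCone.liftCochain_descCochain, hid]

end MappingCone

section Summands

open CochainComplex CochainComplex.HomComplex

variable {C₁ C₂ D : Type*} [Category* C₁] [Category* C₂] [Category* D]
  [HasZeroMorphisms C₁] [HasZeroMorphisms C₂] [Preadditive D]
  {F : C₁ ⥤ C₂ ⥤ D} [F.PreservesZeroMorphisms] [∀ X, (F.obj X).PreservesZeroMorphisms]
  {B : CochainComplex C₁ ℤ} {K : CochainComplex C₂ ℤ} [HasMapBifunctor B K F]

lemma mapBifunctor_cochain_ext {N : CochainComplex D ℤ} {n : ℤ}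
    {z z' : Cochain (mapBifunctor B K F) N n}
    (hz : ∀ (p q a b : ℤ) (h : p + q = a) (hab : a + n = b),
      ιMapBifunctor B K F p q a h ≫ z.v a b hab = ιMapBifunctor B K F p q a h ≫ z'.v a b hab) :
    z = z' := by
  ext a b hab p q h
  exact hz p q a b h hab

variable (F B K) in
lemma ι_mapBifunctor_d {p p' q q' n n' : ℤ} (h : p + q = n) (hp : p + 1 = p')
    (hq : q + 1 = q') (hn : n + 1 = n') :
    ιMapBifunctor B K F p q n h ≫ (mapBifunctor B K F).d n n' =
      (F.map (B.d p p')).app (K.X q) ≫ ιMapBifunctor B K F p' q n' (by lia) +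
        p.negOnePow •
          (F.obj (B.X p)).map (K.d q q') ≫ ιMapBifunctor B K F p q' n' (by lia) := by
  rw [HomologicalComplex.mapBifunctor.d_eq, Preadditive.comp_add,
    HomologicalComplex.mapBifunctor.ι_D₁, HomologicalComplex.mapBifunctor.ι_D₂,
    HomologicalComplex.mapBifunctor.d₁_eq B K F (.up ℤ) hp q n' (show p' + q = n' by lia),
    HomologicalComplex.mapBifunctor.d₂_eq B K F (.up ℤ) p hq n' (show p + q' = n' by lia)]
  simp

end Summands

section Cochain

open CochainComplex CochainComplex.HomComplex
open HomologicalComplex (HasHomotopyCofiber mapBifunctorMap)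

variable {C₁ C₂ D : Type*} [Category* C₁] [Category* C₂] [Category* D]
  [HasZeroMorphisms C₁] [Preadditive C₂] [Preadditive D]
  (F : C₁ ⥤ C₂ ⥤ D) [F.PreservesZeroMorphisms] [∀ X, (F.obj X).Additive]
  (B : CochainComplex C₁ ℤ) {K L M : CochainComplex C₂ ℤ}
  [HasMapBifunctor B K F] [HasMapBifunctor B L F] [HasMapBifunctor B M F]

/-- The cochain `1 ⊗ z` between the complexes `F(B, K)` and `F(B, L)`, given by
`(-1) ^ (p * n) • F(B.X p, z)` on the summands coming from `B.X p`: the Koszul sign for moving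
`z`, of degree `n`, past `B.X p`. -/
noncomputable def mapCochain₂ {n : ℤ} (z : Cochain K L n) :
    Cochain (mapBifunctor B K F) (mapBifunctor B L F) n :=
  Cochain.mk fun a b hab => HomologicalComplex.mapBifunctorDesc fun p q h =>
    (p * n).negOnePow • (F.obj (B.X p)).map (z.v q (q + n) rfl) ≫
      ιMapBifunctor B L F p (q + n) b (by have : p + q = a := h; lia)

lemma ι_mapCochain₂_v {n : ℤ} (z : Cochain K L n) {p q q' a b : ℤ} (h : p + q = a)
    (hab : a + n = b) (hq : q + n = q') :
    ιMapBifunctor B K F p q a h ≫ (mapCochain₂ F B z).v a b hab =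
      (p * n).negOnePow • (F.obj (B.X p)).map (z.v q q' hq) ≫
        ιMapBifunctor B L F p q' b (by lia) := by
  subst hq
  rw [mapCochain₂, Cochain.mk_v]
  apply HomologicalComplex.ι_mapBifunctorDesc

lemma mapCochain₂_ofHom (f : K ⟶ L) :
    mapCochain₂ F B (Cochain.ofHom f) =
      Cochain.ofHom (mapBifunctorMap (𝟙 B) f F (.up ℤ)) := by
  refine mapBifunctor_cochain_ext fun p q a b h hab => ?_
  obtain rfl : b = a := by lia
  rw [ι_mapCochain₂_v F B _ h _ (add_zero q)]
  simp

lemma mapCochain₂_zero (n : ℤ) : mapCochain₂ F B (0 : Cochain K L n) = 0 := by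
  refine mapBifunctor_cochain_ext fun p q a b h hab => ?_
  rw [ι_mapCochain₂_v F B _ h _ rfl]
  simp

lemma mapCochain₂_add {n : ℤ} (z z' : Cochain K L n) :
    mapCochain₂ F B (z + z') = mapCochain₂ F B z + mapCochain₂ F B z' := by
  refine mapBifunctor_cochain_ext fun p q a b h hab => ?_
  rw [Cochain.add_v, Preadditive.comp_add, ι_mapCochain₂_v F B _ h _ rfl,
    ι_mapCochain₂_v F B _ h _ rfl, ι_mapCochain₂_v F B _ h _ rfl]
  simp

lemma mapCochain₂_comp {n₁ n₂ n₁₂ : ℤ} (z₁ : Cochain K L n₁) (z₂ : Cochain L M n₂)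
    (h : n₁ + n₂ = n₁₂) :
    mapCochain₂ F B (z₁.comp z₂ h) = (mapCochain₂ F B z₁).comp (mapCochain₂ F B z₂) h := by
  refine mapBifunctor_cochain_ext fun p q a b hpq hab => ?_
  rw [ι_mapCochain₂_v F B _ hpq hab (show q + n₁₂ = q + n₁ + n₂ by lia),
    Cochain.comp_v _ _ h a (a + n₁) b rfl (by lia), ← Category.assoc,
    ι_mapCochain₂_v F B z₁ hpq rfl rfl, Linear.units_smul_comp, Category.assoc,
    ι_mapCochain₂_v F B z₂ _ _ rfl, Linear.comp_units_smul, smul_smul, ← Int.negOnePow_add,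
    ← mul_add, h, ← Functor.map_comp_assoc, ← Cochain.comp_v]

lemma mapCochain₂_δ {n m : ℤ} (hnm : n + 1 = m) (z : Cochain K L n) :
    mapCochain₂ F B (δ n m z) = δ n m (mapCochain₂ F B z) := by
  refine mapBifunctor_cochain_ext fun p q a b h hab => ?_
  have koszul_succ : (p * m).negOnePow = (p * n).negOnePow * p.negOnePow := by
    rw [← Int.negOnePow_add, ← hnm, mul_add, mul_one]
  -- The two terms in which the differential of `B` occurs cancel.
  have koszul_cancel : m.negOnePow * ((p + 1) * n).negOnePow = -(p * n).negOnePow := by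
    rw [← hnm, Int.negOnePow_succ, add_mul, one_mul, Int.negOnePow_add, neg_mul,
      mul_left_comm, Int.units_mul_self, mul_one]
  rw [ι_mapCochain₂_v F B _ h hab rfl, δ_v n m hnm _ a b hab (b - 1) (a + 1) rfl rfl,
    δ_v n m hnm z q (q + m) rfl (q + n) (q + 1) (by lia) rfl, Preadditive.comp_add,
    ← Category.assoc, ι_mapCochain₂_v F B z h _ rfl, Linear.comp_units_smul, ← Category.assoc,
    ι_mapBifunctor_d F B K h rfl rfl rfl, Linear.units_smul_comp, Category.assoc,
    ι_mapBifunctor_d F B L (n' := b) (q' := q + m) _ rfl (by lia) (by lia), Preadditive.add_comp,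
    Linear.units_smul_comp, Category.assoc, Category.assoc,
    ι_mapCochain₂_v F B z _ _ rfl, ι_mapCochain₂_v F B z (q' := q + m) _ _ (by lia)]
  simp only [Functor.map_add, Functor.map_comp, Functor.map_units_smul, Preadditive.comp_add,
    Preadditive.add_comp, Linear.comp_units_smul, Linear.units_smul_comp, smul_add, smul_smul,
    Category.assoc, NatTrans.naturality_assoc, koszul_succ, koszul_cancel]
  rw [mul_comm m.negOnePow, mul_comm p.negOnePow, Units.neg_smul]
  abel

variable (f : K ⟶ L) [HasHomotopyCofiber f] [HasMapBifunctor B (mappingCone f) F]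
  [HasHomotopyCofiber (mapBifunctorMap (𝟙 B) f F (.up ℤ))]

/-- The comparison map `cone F(B, f) ⟶ F(B, cone f)`, whose components are the images under
`F(B, -)` of the inclusions of `K` and `L` in `cone f`. -/
noncomputable def mappingConeMapBifunctorHom :
    mappingCone (mapBifunctorMap (𝟙 B) f F (.up ℤ)) ⟶ mapBifunctor B (mappingCone f) F :=
  mappingCone.desc _ (mapCochain₂ F B (mappingCone.inl f))
    (mapBifunctorMap (𝟙 B) (mappingCone.inr f) F (.up ℤ)) (by
      rw [← mapCochain₂_δ F B (neg_add_cancel 1), mappingCone.δ_inl, mapCochain₂_ofHom,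
        mapBifunctorMap_comp, Category.comp_id])

instance isIso_mappingConeMapBifunctorHom : IsIso (mappingConeMapBifunctorHom F B f) := by
  refine isIso_mappingCone_desc _ _ _ _ (mapCochain₂ F B (mappingCone.fst f).1)
    (mapCochain₂ F B (mappingCone.snd f)) ?_ ?_ ?_ ?_ ?_
  · rw [← mapCochain₂_comp, mappingCone.inl_fst, mapCochain₂_ofHom, mapBifunctorMap_id]
  · rw [← mapCochain₂_comp, mappingCone.inl_snd, mapCochain₂_zero]
  · rw [← mapCochain₂_ofHom, ← mapCochain₂_comp, mappingCone.inr_fst, mapCochain₂_zero]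
  · rw [← mapCochain₂_ofHom, ← mapCochain₂_comp, mappingCone.inr_snd, mapCochain₂_ofHom,
      mapBifunctorMap_id]
  · rw [← mapCochain₂_ofHom, ← mapCochain₂_comp, ← mapCochain₂_comp, ← mapCochain₂_add,
      mappingCone.id, mapCochain₂_ofHom, mapBifunctorMap_id]

end Cochain

theorem homOrder_whiskerLeft_general {S T : Type} [Ring S] [Ring T]
    {C₁ : Type*} [Category* C₁] [Preadditive C₁]
    (F : C₁ ⥤ ModuleCat S ⥤ ModuleCat T) [F.Additive] [∀ X, (F.obj X).Additive]
    (B : CochainComplex C₁ ℤ) (m : ℤ) (hB : ∀ i : ℤ, i < m → IsZero (B.X i))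
    {A A' : Cx S} (f : A ⟶ A') (d : ℤ) (hf : homOrderGE f d) :
    homOrderGE (HomologicalComplex.mapBifunctorMap (𝟙 B) f F (.up ℤ)) (d + m) := by
  obtain ⟨C, ⟨e⟩, hC⟩ := hf
  refine ⟨CochainComplex.mapBifunctor B C F,
    ⟨(HomotopyEquiv.ofIso (asIso (mappingConeMapBifunctorHom F B f))).trans
      (mapBifunctorHomotopyEquiv F (.refl B) e)⟩, fun j hj => ?_⟩
  refine isZero_mapBifunctor_X F B C j fun p q (hpq : p + q = j) => ?_
  by_cases hp : p < m
  · exact .inl (hB p hp)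
  · exact .inr (hC q (by lia))

/-- Tensoring with a complex `B` that vanishes in degrees `< m`
shifts lower bounds on homological orders by `m`:  if `|f|_h ≥ d` then
`|id_B ⊗ f|_h ≥ d + m`. -/
theorem homOrder_whiskerLeft (B : Cx R) (m : ℤ) (hB : ∀ i : ℤ, i < m → IsZero (B.X i))
    {A A' : Cx R} (f : A ⟶ A') (d : ℤ) (hf : homOrderGE f d) :
    homOrderGE (B ◁ f) (d + m) :=
  homOrder_whiskerLeft_general (curriedTensor (ModuleCat R)) B m hB f d hf

end Monoidal
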